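/- arXiv:2007.16134 — 2 statements merged into one kernel-verified Lean document; each statement's English description precedes it below -/
import Mathlib

section
/- Let α ∈ (0,1), T > 0 and γ > 0. For any λ ≥ 0 and any t ∈ (0,T], with w(t,λ) := E_{α,1}(-λ t^α) one has w(t,λ)/(γ + w(T,λ)) ≤ min(γ^{-1}, c·t^{-α}), where c depends only on α and T. In particular the quantity is bounded by γ^{-1} using only 0 ≤ E_{α,1}(-z) ≤ 1. -/
/-- The one-parameter Mittag-Leffler function `E_{α,1}(z) = ∑_{k=0}^∞ z^k / Γ(kα+1)`. -/
noncomputable def mittagLeffler (α z : ℝ) : ℝ :=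
  ∑' k : ℕ, z ^ k / Real.Gamma (k * α + 1)

/-!
A function on `(0, 1]` that attains its minimum at `1` has a nonpositive Caputo derivative there,
and its value there is below its averages. For power series in `s ^ α` both facts come from
integrating `F 1 - F s` against a power of `1 - s`, term by term, by the Beta integral. Write
`E = E_{α,1}`. Since `s ↦ E(-λ s ^ α)` is an eigenfunction of the Caputo derivative, the first fact
gives the lower bound `1 / (1 + Γ(1-α) z) ≤ E(-z)`, hence positivity, and then, applied to
differences of two such eigenfunctions, monotonicity of `E` on the negative axis. Monotonicity makes
the second fact available, which yields `E(-z) ≤ 1 / (1 + z / Γ(α+1))`.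

With `x = t ^ α ≤ y = T ^ α`, the bounds `x E(-λ x) ≤ y` and `λ x E(-λ x) ≤ Γ(α+1)` combine to
`(1 + Γ(1-α) λ y) x E(-λ x) ≤ (1 + Γ(1-α) Γ(α+1)) y`, and the lower bound for `E(-λ y)` turns this
into an estimate of `x E(-λ x)` by a multiple of `y E(-λ y)` that is uniform in `λ`.
-/

open Filter MeasureTheory Set Topology

section BetaIntegral

variable {a b : ℝ}

lemma ofReal_betaIntegrand {x : ℝ} (hx : x ∈ Ioo (0 : ℝ) 1) :
    ((x ^ (a - 1) * (1 - x) ^ (b - 1) : ℝ) : ℂ) =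
      (x : ℂ) ^ ((a : ℂ) - 1) * (1 - (x : ℂ)) ^ ((b : ℂ) - 1) := by
  push_cast [Complex.ofReal_cpow hx.1.le, Complex.ofReal_cpow (sub_nonneg.2 hx.2.le)]
  rfl

lemma integrableOn_rpow_mul_one_sub_rpow (ha : 0 < a) (hb : 0 < b) :
    IntegrableOn (fun x : ℝ => x ^ (a - 1) * (1 - x) ^ (b - 1)) (Ioo 0 1) := by
  have h := Complex.betaIntegral_convergent (u := a) (v := b) (by simpa) (by simpa)
  rw [intervalIntegrable_iff_integrableOn_Ioo_of_le zero_le_one] at h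
  exact (h.congr_fun (fun x hx => (ofReal_betaIntegrand hx).symm) measurableSet_Ioo).re

lemma setIntegral_rpow_mul_one_sub_rpow (ha : 0 < a) (hb : 0 < b) :
    ∫ x in Ioo (0 : ℝ) 1, x ^ (a - 1) * (1 - x) ^ (b - 1) =
      Real.Gamma a * Real.Gamma b / Real.Gamma (a + b) := by
  have h := ProbabilityTheory.beta_eq_betaIntegralReal a b ha hb
  rw [Complex.betaIntegral, intervalIntegral.integral_of_le zero_le_one,
    integral_Ioc_eq_integral_Ioo,
    setIntegral_congr_fun measurableSet_Ioo (fun x hx => (ofReal_betaIntegrand hx).symm),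
    integral_complex_ofReal, Complex.ofReal_re] at h
  exact h.symm

end BetaIntegral

/-- The kernel whose integral over `(0, 1)` gives the value at `1` of a fractional operator on
`x ↦ x ^ b`. Up to normalization, integrating `(F 1 - F s) * (1 - s) ^ (p - 1)` compares `F 1` with
the Riemann–Liouville integral of order `p` when `0 < p`, and with the Caputo derivative of order
`-p`, in Marchaud's form, when `-1 < p < 0`. -/
noncomputable def fractionalKernel (p b s : ℝ) : ℝ :=
  (1 - s ^ b) * (1 - s) ^ (p - 1)

section FractionalKernel

variable {p b s : ℝ}

lemma fractionalKernel_nonneg (hb : 0 ≤ b) (hs : s ∈ Ioo (0 : ℝ) 1) :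
    0 ≤ fractionalKernel p b s :=
  mul_nonneg (sub_nonneg.2 (Real.rpow_le_one hs.1.le hs.2.le hb))
    (Real.rpow_nonneg (sub_nonneg.2 hs.2.le) _)

lemma one_sub_rpow_le_mul_one_sub (hb : 0 ≤ b) (hs₀ : 0 ≤ s) (hs₁ : s ≤ 1) :
    1 - s ^ b ≤ (b + 1) * (1 - s) := by
  rcases le_total 1 b with h | h
  · have bernoulli := one_add_mul_self_le_rpow_one_add (s := s - 1) (by linarith) h
    rw [add_sub_cancel] at bernoulli
    nlinarith
  · have := Real.rpow_le_rpow_of_exponent_ge' hs₀ hs₁ hb h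
    rw [Real.rpow_one] at this
    nlinarith

lemma one_sub_rpow_mul_rpow_le (hb : 0 ≤ b) (hs : s ∈ Ioo (0 : ℝ) 1) (q : ℝ) :
    (1 - s ^ b) * (1 - s) ^ q ≤ (b + 1) * (1 - s) ^ (q + 1) := by
  have hs' : 0 < 1 - s := sub_pos.2 hs.2
  calc (1 - s ^ b) * (1 - s) ^ q ≤ (b + 1) * (1 - s) * (1 - s) ^ q := by
        gcongr
        exact one_sub_rpow_le_mul_one_sub hb hs.1.le hs.2.le
    _ = (b + 1) * (1 - s) ^ (q + 1) := by rw [Real.rpow_add_one hs'.ne']; ring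

lemma integrableOn_fractionalKernel (hp : -1 < p) (hb : 0 ≤ b) :
    IntegrableOn (fractionalKernel p b) (Ioo 0 1) := by
  have hdom : IntegrableOn (fun s : ℝ => (b + 1) * (1 - s) ^ p) (Ioo 0 1) := by
    simpa [IntegrableOn] using (integrableOn_rpow_mul_one_sub_rpow one_pos
      (by linarith : 0 < p + 1)).const_mul (b + 1)
  refine Integrable.mono' hdom
    (Measurable.aestronglyMeasurable (by unfold fractionalKernel; fun_prop)) ?_
  refine ae_restrict_of_forall_mem measurableSet_Ioo fun s hs => ?_
  rw [Real.norm_of_nonneg (fractionalKernel_nonneg hb hs)]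
  exact (one_sub_rpow_mul_rpow_le hb hs (p - 1)).trans_eq (by rw [sub_add_cancel])

lemma tendsto_one_sub_rpow_mul_rpow (hp : -1 < p) (hb : 0 ≤ b) :
    Tendsto (fun s : ℝ => (1 - s ^ b) * (1 - s) ^ p) (𝓝[<] 1) (𝓝 0) := by
  have hbound : Tendsto (fun s : ℝ => (b + 1) * (1 - s) ^ (p + 1)) (𝓝[<] 1) (𝓝 0) := by
    have hcont : ContinuousAt (fun s : ℝ => (b + 1) * (1 - s) ^ (p + 1)) 1 :=
      continuousAt_const.mul (ContinuousAt.rpow_const (by fun_prop) (Or.inr (by linarith)))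
    simpa [Real.zero_rpow (by linarith : p + 1 ≠ 0)] using
      hcont.tendsto.mono_left nhdsWithin_le_nhds
  have hmem : ∀ᶠ s : ℝ in 𝓝[<] 1, s ∈ Ioo (0 : ℝ) 1 := Ioo_mem_nhdsLT zero_lt_one
  refine squeeze_zero' ?_ ?_ hbound
  · filter_upwards [hmem] with s hs
    exact mul_nonneg (sub_nonneg.2 (Real.rpow_le_one hs.1.le hs.2.le hb))
      (Real.rpow_nonneg (sub_nonneg.2 hs.2.le) _)
  · filter_upwards [hmem] with s hs using one_sub_rpow_mul_rpow_le hb hs p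

lemma hasDerivAt_one_sub_rpow_mul_rpow (hs : s ∈ Ioo (0 : ℝ) 1) :
    HasDerivAt (fun s : ℝ => (1 - s ^ b) * (1 - s) ^ p)
      (-(b * (s ^ (b - 1) * (1 - s) ^ p) + p * fractionalKernel p b s)) s := by
  have hpow : HasDerivAt (fun s : ℝ => 1 - s ^ b) (-(b * s ^ (b - 1))) s :=
    (Real.hasDerivAt_rpow_const (Or.inl hs.1.ne')).const_sub 1
  have hone_sub : HasDerivAt (fun s : ℝ => (1 - s) ^ p) (-1 * p * (1 - s) ^ (p - 1)) s :=
    ((hasDerivAt_id s).const_sub 1).rpow_const (Or.inl (sub_pos.2 hs.2).ne')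
  refine (hpow.mul hone_sub).congr_deriv ?_
  unfold fractionalKernel
  ring

lemma mul_setIntegral_fractionalKernel (hp : -1 < p) (hb : 0 ≤ b) :
    p * ∫ s in Ioo (0 : ℝ) 1, fractionalKernel p b s =
      1 - Real.Gamma (b + 1) * Real.Gamma (p + 1) / Real.Gamma (b + p + 1) := by
  have hp' : 0 < p + 1 := by linarith
  rcases hb.eq_or_lt with rfl | hb
  · simp [fractionalKernel, (Real.Gamma_pos_of_pos hp').ne']
  have hβint : IntegrableOn (fun s : ℝ => b * (s ^ (b - 1) * (1 - s) ^ p)) (Ioo 0 1) := by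
    simpa [IntegrableOn] using (integrableOn_rpow_mul_one_sub_rpow hb hp').const_mul b
  have hβ : ∫ s in Ioo (0 : ℝ) 1, b * (s ^ (b - 1) * (1 - s) ^ p) =
      Real.Gamma (b + 1) * Real.Gamma (p + 1) / Real.Gamma (b + p + 1) := by
    have := setIntegral_rpow_mul_one_sub_rpow hb hp'
    rw [add_sub_cancel_right] at this
    rw [integral_const_mul, this, Real.Gamma_add_one hb.ne', add_assoc]
    ring
  have hKint := (integrableOn_fractionalKernel hp hb.le).const_mul p
  have hzero : Tendsto (fun s : ℝ => (1 - s ^ b) * (1 - s) ^ p) (𝓝[>] 0) (𝓝 1) := by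
    have hcont : ContinuousAt (fun s : ℝ => (1 - s ^ b) * (1 - s) ^ p) 0 :=
      (continuousAt_const.sub (Real.continuousAt_rpow_const _ _ (Or.inr hb.le))).mul
        (ContinuousAt.rpow_const (by fun_prop) (Or.inl (by simp)))
    simpa [Real.zero_rpow hb.ne'] using hcont.tendsto.mono_left nhdsWithin_le_nhds
  have ftc := intervalIntegral.integral_eq_sub_of_hasDerivAt_of_tendsto zero_lt_one
    (fun s hs => hasDerivAt_one_sub_rpow_mul_rpow hs)
    ((intervalIntegrable_iff_integrableOn_Ioo_of_le zero_le_one).2 (hβint.add hKint).neg)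
    hzero (tendsto_one_sub_rpow_mul_rpow hp hb.le)
  rw [intervalIntegral.integral_of_le zero_le_one, integral_Ioc_eq_integral_Ioo,
    integral_neg, integral_add hβint hKint, hβ, integral_const_mul] at ftc
  linarith

end FractionalKernel

lemma nonpos_of_hasSum_mul_integral {X ι : Type*} [MeasurableSpace X] [Countable ι] {μ : Measure X}
    {K : ι → X → ℝ} {c : ι → ℝ} {S : ℝ} (hK : ∀ i, Integrable (K i) μ)
    (hK₀ : ∀ i, 0 ≤ᵐ[μ] K i) (hS : HasSum (fun i => c i * ∫ x, K i x ∂μ) S)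
    (hc : ∀ᵐ x ∂μ, ∑' i, c i * K i x ≤ 0) : S ≤ 0 := by
  have hnorm : ∀ i, ∫ x, ‖c i * K i x‖ ∂μ = ‖c i * ∫ x, K i x ∂μ‖ := fun i => by
    simp_rw [norm_mul, integral_const_mul, Real.norm_of_nonneg (integral_nonneg_of_ae (hK₀ i))]
    congr 1
    exact integral_congr_ae ((hK₀ i).mono fun x hx => Real.norm_of_nonneg hx)
  have hsum := hasSum_integral_of_summable_integral_norm (fun i => (hK i).const_mul (c i))
    (by simpa only [hnorm] using hS.summable.norm)
  simp_rw [integral_const_mul] at hsum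
  exact (hS.unique hsum).trans_le (integral_nonpos_of_ae hc)

lemma nonpos_of_hasSum_fractionalKernel {α p S : ℝ} (hα : 0 ≤ α) (hp : -1 < p) {c : ℕ → ℝ}
    {F : ℝ → ℝ} (hF : ∀ r ∈ Ioc (0 : ℝ) 1, HasSum (fun k => c k * r ^ k) (F r))
    (hmin : ∀ r ∈ Ioc (0 : ℝ) 1, F 1 ≤ F r)
    (hS : HasSum (fun k : ℕ => c k * ∫ s in Ioo (0 : ℝ) 1, fractionalKernel p (k * α) s) S) :
    S ≤ 0 := by
  refine nonpos_of_hasSum_mul_integral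
    (fun k => integrableOn_fractionalKernel hp (by positivity)) (fun k =>
      ae_restrict_of_forall_mem measurableSet_Ioo fun s => fractionalKernel_nonneg (by positivity))
    hS (ae_restrict_of_forall_mem measurableSet_Ioo fun s hs => ?_)
  have hsα : s ^ α ∈ Ioc (0 : ℝ) 1 :=
    ⟨Real.rpow_pos_of_pos hs.1 α, Real.rpow_le_one hs.1.le hs.2.le hα⟩
  have hterm : ∀ k : ℕ, (c k * 1 ^ k - c k * (s ^ α) ^ k) * (1 - s) ^ (p - 1) =
      c k * fractionalKernel p (k * α) s := fun k => by
    rw [fractionalKernel, mul_comm (k : ℝ), Real.rpow_mul hs.1.le, Real.rpow_natCast]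
    ring
  have hsum := ((hF 1 ⟨one_pos, le_rfl⟩).sub (hF _ hsα)).mul_right ((1 - s) ^ (p - 1))
  simp_rw [hterm] at hsum
  exact hsum.tsum_eq.trans_le (mul_nonpos_of_nonpos_of_nonneg (sub_nonpos.2 (hmin _ hsα))
    (Real.rpow_nonneg (sub_nonneg.2 hs.2.le) _))

lemma rpow_mul_exp_neg_le_Gamma_add_one {R x : ℝ} (hR : 0 ≤ R) (hx : 0 ≤ x) :
    R ^ x * Real.exp (-R) ≤ Real.Gamma (x + 1) := by
  have hint := Real.GammaIntegral_convergent (s := x + 1) (by linarith)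
  have hsub : Ioi R ⊆ Ioi (0 : ℝ) := Ioi_subset_Ioi hR
  rw [Real.Gamma_eq_integral (by linarith)]
  calc R ^ x * Real.exp (-R) = ∫ t in Ioi R, R ^ x * Real.exp (-t) := by
        rw [integral_const_mul, integral_exp_neg_Ioi]
    _ ≤ ∫ t in Ioi R, Real.exp (-t) * t ^ (x + 1 - 1) := by
        refine setIntegral_mono_on ((integrableOn_exp_neg_Ioi R).const_mul _) (hint.mono_set hsub)
          measurableSet_Ioi fun t ht => ?_
        rw [mul_comm, add_sub_cancel_right]
        gcongr
        exact (mem_Ioi.1 ht).le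
    _ ≤ ∫ t in Ioi 0, Real.exp (-t) * t ^ (x + 1 - 1) :=
        setIntegral_mono_set hint
          (ae_restrict_of_forall_mem measurableSet_Ioi fun t ht =>
            mul_nonneg (Real.exp_pos _).le (Real.rpow_nonneg (mem_Ioi.1 ht).le _))
          (Eventually.of_forall hsub)

section MittagLeffler

variable {α : ℝ}

lemma Gamma_natCast_mul_add_one_pos (hα : 0 ≤ α) (k : ℕ) : 0 < Real.Gamma (k * α + 1) :=
  Real.Gamma_pos_of_pos (by positivity)

lemma summable_mittagLeffler (hα : 0 < α) (z : ℝ) :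
    Summable fun k : ℕ => z ^ k / Real.Gamma (k * α + 1) := by
  set R : ℝ := (|z| + 1) ^ α⁻¹
  have hgrowth : ∀ k : ℕ, (|z| + 1) ^ k * Real.exp (-R) ≤ Real.Gamma (k * α + 1) := fun k => by
    have h := rpow_mul_exp_neg_le_Gamma_add_one (R := R) (x := k * α) (by positivity)
      (by positivity)
    rwa [← Real.rpow_mul (by positivity), mul_left_comm, inv_mul_cancel₀ hα.ne', mul_one,
      Real.rpow_natCast] at h
  have hratio : |z| / (|z| + 1) < 1 := (div_lt_one (by positivity)).2 (lt_add_one _)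
  refine .of_norm_bounded
    ((summable_geometric_of_lt_one (by positivity) hratio).mul_right (Real.exp R)) fun k => ?_
  rw [norm_div, norm_pow, Real.norm_eq_abs,
    Real.norm_of_nonneg (Gamma_natCast_mul_add_one_pos hα.le k).le]
  calc |z| ^ k / Real.Gamma (k * α + 1) ≤ |z| ^ k / ((|z| + 1) ^ k * Real.exp (-R)) := by
        gcongr
        exact hgrowth k
    _ = (|z| / (|z| + 1)) ^ k * Real.exp R := by
        rw [Real.exp_neg, div_pow]
        field_simp

lemma hasSum_mittagLeffler (hα : 0 < α) (z : ℝ) :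
    HasSum (fun k : ℕ => z ^ k / Real.Gamma (k * α + 1)) (mittagLeffler α z) :=
  (summable_mittagLeffler hα z).hasSum

lemma hasSum_mittagLeffler_mul (hα : 0 < α) (z r : ℝ) :
    HasSum (fun k : ℕ => z ^ k / Real.Gamma (k * α + 1) * r ^ k) (mittagLeffler α (z * r)) := by
  simpa only [mul_pow, div_mul_eq_mul_div] using hasSum_mittagLeffler hα (z * r)

lemma hasSum_mittagLeffler_succ (hα : 0 < α) (z : ℝ) :
    HasSum (fun k : ℕ => z ^ (k + 1) / Real.Gamma ((k + 1 : ℕ) * α + 1))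
      (mittagLeffler α z - 1) := by
  simpa using (hasSum_nat_add_iff' 1).2 (hasSum_mittagLeffler hα z)

lemma mittagLeffler_zero : mittagLeffler α 0 = 1 := by
  rw [mittagLeffler, tsum_eq_single 0 fun k hk => by simp [hk]]
  simp

lemma continuous_mittagLeffler (hα : 0 < α) : Continuous (mittagLeffler α) := by
  refine continuous_iff_continuousAt.2 fun z => ?_
  have hball : ContinuousOn (mittagLeffler α) (Metric.ball 0 (|z| + 1)) := by
    refine continuousOn_tsum (fun k => by fun_prop) (summable_mittagLeffler hα (|z| + 1))
      fun k x hx => ?_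
    rw [norm_div, norm_pow, Real.norm_of_nonneg (Gamma_natCast_mul_add_one_pos hα.le k).le]
    have := Gamma_natCast_mul_add_one_pos hα.le k
    gcongr
    exact (mem_ball_zero_iff.1 hx).le
  exact hball.continuousAt (Metric.isOpen_ball.mem_nhds (by simp))

lemma hasSum_mittagLeffler_fractionalKernel (hα : 0 < α) (z : ℝ) :
    HasSum (fun k : ℕ => z ^ k / Real.Gamma (k * α + 1) * z *
        ∫ s in Ioo (0 : ℝ) 1, fractionalKernel α (k * α) s)
      ((mittagLeffler α z * z - Real.Gamma (α + 1) * (mittagLeffler α z - 1)) / α) := by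
  convert! (((hasSum_mittagLeffler hα z).mul_right z).sub
    ((hasSum_mittagLeffler_succ hα z).mul_left (Real.Gamma (α + 1)))).div_const α using 2 with k
  have hΓ := (Gamma_natCast_mul_add_one_pos hα.le k).ne'
  have hker := mul_setIntegral_fractionalKernel (p := α) (b := k * α) (by linarith) (by positivity)
  rw [show k * α + α + 1 = (k + 1 : ℕ) * α + 1 by push_cast; ring, mul_comm,
    ← eq_div_iff hα.ne'] at hker
  rw [hker]
  field_simp
  ring

lemma hasSum_mittagLeffler_fractionalKernel_neg (hα : α ∈ Ioo (0 : ℝ) 1) (z : ℝ) :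
    HasSum (fun k : ℕ => z ^ k / Real.Gamma (k * α + 1) *
        ∫ s in Ioo (0 : ℝ) 1, fractionalKernel (-α) (k * α) s)
      ((Real.Gamma (1 - α) * (z * mittagLeffler α z) - (mittagLeffler α z - 1)) / α) := by
  have hα₀ := hα.1
  have hzero : ∫ s in Ioo (0 : ℝ) 1, fractionalKernel (-α) ((0 : ℕ) * α) s = 0 := by
    simp [fractionalKernel]
  rw [← hasSum_nat_add_iff' 1, Finset.sum_range_one, hzero, mul_zero, sub_zero]
  convert! ((((hasSum_mittagLeffler hα₀ z).mul_left z).mul_left (Real.Gamma (1 - α))).sub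
    (hasSum_mittagLeffler_succ hα₀ z)).div_const α using 2 with k
  have hΓ := (Gamma_natCast_mul_add_one_pos hα₀.le (k + 1)).ne'
  have hker := mul_setIntegral_fractionalKernel (p := -α) (b := (k + 1 : ℕ) * α)
    (by linarith [hα.2]) (by positivity)
  rw [show (k + 1 : ℕ) * α + -α + 1 = k * α + 1 by push_cast; ring,
    show -α + 1 = 1 - α by ring, mul_comm, ← eq_div_iff (neg_ne_zero.2 hα₀.ne')] at hker
  rw [hker]
  field_simp
  ring

lemma one_div_le_mittagLeffler_neg (hα : α ∈ Ioo (0 : ℝ) 1) {z : ℝ} (hz : 0 ≤ z) :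
    1 / (1 + Real.Gamma (1 - α) * z) ≤ mittagLeffler α (-z) := by
  have hα₀ := hα.1
  have hΓ : 0 < Real.Gamma (1 - α) := Real.Gamma_pos_of_pos (sub_pos.2 hα.2)
  obtain ⟨y, ⟨hy₀, hyz⟩, hmin⟩ := isCompact_Icc.exists_isMinOn (nonempty_Icc.2 hz)
    ((continuous_mittagLeffler hα₀).comp continuous_neg).continuousOn
  have hminr : ∀ r ∈ Ioc (0 : ℝ) 1, mittagLeffler α (-y * 1) ≤ mittagLeffler α (-y * r) :=
    fun r hr => by
      have hyr : y * r ∈ Icc 0 z :=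
        ⟨mul_nonneg hy₀ hr.1.le, (mul_le_of_le_one_right hy₀ hr.2).trans hyz⟩
      simpa using isMinOn_iff.1 hmin _ hyr
  have hcaputo := nonpos_of_hasSum_fractionalKernel hα₀.le (by linarith [hα.2])
    (fun r _ => hasSum_mittagLeffler_mul hα₀ (-y) r) hminr
    (hasSum_mittagLeffler_fractionalKernel_neg hα (-y))
  rw [div_le_iff₀ hα₀, zero_mul] at hcaputo
  calc 1 / (1 + Real.Gamma (1 - α) * z) ≤ 1 / (1 + Real.Gamma (1 - α) * y) := by gcongr
    _ ≤ mittagLeffler α (-y) := by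
        rw [div_le_iff₀ (by positivity)]
        linarith
    _ ≤ mittagLeffler α (-z) := isMinOn_iff.1 hmin z (right_mem_Icc.2 hz)

lemma mittagLeffler_pos_of_nonpos (hα : α ∈ Ioo (0 : ℝ) 1) {z : ℝ} (hz : z ≤ 0) :
    0 < mittagLeffler α z := by
  have hΓ : 0 < Real.Gamma (1 - α) := Real.Gamma_pos_of_pos (sub_pos.2 hα.2)
  have hz' : 0 ≤ -z := neg_nonneg.2 hz
  have h := one_div_le_mittagLeffler_neg hα hz'
  rw [neg_neg] at h
  exact lt_of_lt_of_le (by positivity) h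

lemma monotoneOn_mittagLeffler (hα : α ∈ Ioo (0 : ℝ) 1) :
    MonotoneOn (mittagLeffler α) (Iic 0) := by
  intro a ha b hb hab
  have hα₀ := hα.1
  have hΓ : 0 < Real.Gamma (1 - α) := Real.Gamma_pos_of_pos (sub_pos.2 hα.2)
  have hcont := continuous_mittagLeffler hα₀
  obtain ⟨x, ⟨hx₀, hx₁⟩, hmin⟩ := (isCompact_Icc (a := (0 : ℝ)) (b := 1)).exists_isMinOn
    (nonempty_Icc.2 zero_le_one)
    (f := fun x => mittagLeffler α (b * x) - mittagLeffler α (a * x)) (by fun_prop)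
  set D := mittagLeffler α (b * x) - mittagLeffler α (a * x) with hD
  have hcaputo := nonpos_of_hasSum_fractionalKernel (p := -α) hα₀.le (by linarith [hα.2])
    (c := fun k => (b * x) ^ k / Real.Gamma (k * α + 1) - (a * x) ^ k / Real.Gamma (k * α + 1))
    (F := fun r => mittagLeffler α (b * x * r) - mittagLeffler α (a * x * r))
    (fun r _ => by
      simpa only [sub_mul] using (hasSum_mittagLeffler_mul hα₀ (b * x) r).sub
        (hasSum_mittagLeffler_mul hα₀ (a * x) r))
    (fun r hr => by
      have hxr : x * r ∈ Icc (0 : ℝ) 1 :=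
        ⟨mul_nonneg hx₀ hr.1.le, (mul_le_of_le_one_right hx₀ hr.2).trans hx₁⟩
      simpa only [mul_assoc, mul_one] using isMinOn_iff.1 hmin _ hxr)
    (by
      simpa only [sub_mul] using (hasSum_mittagLeffler_fractionalKernel_neg hα (b * x)).sub
        (hasSum_mittagLeffler_fractionalKernel_neg hα (a * x)))
  rw [← sub_div, div_le_iff₀ hα₀, zero_mul] at hcaputo
  have hsource : 0 ≤ Real.Gamma (1 - α) * ((b - a) * x * mittagLeffler α (a * x)) := by
    have hpos := mittagLeffler_pos_of_nonpos hα (mul_nonpos_of_nonpos_of_nonneg ha hx₀)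
    have := sub_nonneg.2 hab
    positivity
  have hdamp : 0 < 1 - Real.Gamma (1 - α) * (b * x) := by
    have := mul_nonpos_of_nonneg_of_nonpos hΓ.le (mul_nonpos_of_nonpos_of_nonneg hb hx₀)
    linarith
  have hDnonneg : 0 ≤ D := by
    refine nonneg_of_mul_nonneg_left ?_ hdamp
    rw [hD]
    linarith
  simpa using hDnonneg.trans (isMinOn_iff.1 hmin 1 (right_mem_Icc.2 zero_le_one))

lemma mittagLeffler_le_one_of_nonpos (hα : α ∈ Ioo (0 : ℝ) 1) {z : ℝ} (hz : z ≤ 0) :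
    mittagLeffler α z ≤ 1 :=
  (monotoneOn_mittagLeffler hα hz self_mem_Iic hz).trans_eq mittagLeffler_zero

lemma mittagLeffler_neg_le_one_div (hα : α ∈ Ioo (0 : ℝ) 1) {z : ℝ} (hz : 0 ≤ z) :
    mittagLeffler α (-z) ≤ 1 / (1 + z / Real.Gamma (α + 1)) := by
  have hα₀ := hα.1
  have hΓ : 0 < Real.Gamma (α + 1) := Real.Gamma_pos_of_pos (by linarith)
  have hmin : ∀ r ∈ Ioc (0 : ℝ) 1, mittagLeffler α (-z * 1) * z ≤ mittagLeffler α (-z * r) * z :=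
    fun r hr => by
      have hzr : z * r ≤ z := mul_le_of_le_one_right hz hr.2
      have hzr₀ : 0 ≤ z * r := mul_nonneg hz hr.1.le
      gcongr
      exact monotoneOn_mittagLeffler hα (mem_Iic.2 (by linarith)) (mem_Iic.2 (by linarith))
        (by linarith)
  have hriemannLiouville := nonpos_of_hasSum_fractionalKernel (p := α) hα₀.le (by linarith)
    (c := fun k => (-z) ^ k / Real.Gamma (k * α + 1) * z)
    (F := fun r => mittagLeffler α (-z * r) * z)
    (fun r _ => by
      simpa only [mul_right_comm] using (hasSum_mittagLeffler_mul hα₀ (-z) r).mul_right z) hmin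
    (by simpa using (hasSum_mittagLeffler_fractionalKernel hα₀ (-z)).neg)
  rw [← neg_div, div_le_iff₀ hα₀, zero_mul] at hriemannLiouville
  rw [le_div_iff₀ (by positivity), mul_add, mul_div_assoc', ← le_sub_iff_add_le', div_le_iff₀ hΓ]
  linarith

lemma mul_mittagLeffler_neg_mul_le (hα : α ∈ Ioo (0 : ℝ) 1) {l a b : ℝ} (hl : 0 ≤ l) (ha : 0 ≤ a)
    (hab : a ≤ b) :
    a * mittagLeffler α (-(l * a)) ≤
      (1 + Real.Gamma (1 - α) * Real.Gamma (α + 1)) * b * mittagLeffler α (-(l * b)) := by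
  have hb : 0 ≤ b := ha.trans hab
  have hΓ : 0 < Real.Gamma (1 - α) := Real.Gamma_pos_of_pos (sub_pos.2 hα.2)
  have hΓ' : 0 < Real.Gamma (α + 1) := Real.Gamma_pos_of_pos (by linarith [hα.1])
  have hla : 0 ≤ l * a := mul_nonneg hl ha
  have hone : mittagLeffler α (-(l * a)) ≤ 1 := mittagLeffler_le_one_of_nonpos hα (neg_nonpos.2 hla)
  have hnum : a * mittagLeffler α (-(l * a)) ≤ b := (mul_le_of_le_one_right ha hone).trans hab
  have hdecay : l * a * mittagLeffler α (-(l * a)) ≤ Real.Gamma (α + 1) := by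
    refine (mul_le_mul_of_nonneg_left (mittagLeffler_neg_le_one_div hα hla) hla).trans ?_
    rw [mul_one_div, div_le_iff₀ (by positivity), mul_add, mul_div_cancel₀ _ hΓ'.ne']
    linarith
  have hlower := one_div_le_mittagLeffler_neg hα (mul_nonneg hl hb)
  calc a * mittagLeffler α (-(l * a))
      = (a * mittagLeffler α (-(l * a)) +
          Real.Gamma (1 - α) * b * (l * a * mittagLeffler α (-(l * a)))) *
          (1 / (1 + Real.Gamma (1 - α) * (l * b))) := by field_simp
    _ ≤ (b + Real.Gamma (1 - α) * b * Real.Gamma (α + 1)) * mittagLeffler α (-(l * b)) := by gcongr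
    _ = _ := by ring

end MittagLeffler

theorem regularized_symbol_bound (α T : ℝ) (hα : α ∈ Set.Ioo (0 : ℝ) 1) (hT : 0 < T) :
    ∃ c : ℝ, 0 < c ∧ ∀ γ : ℝ, 0 < γ → ∀ lam : ℝ, 0 ≤ lam → ∀ t : ℝ, t ∈ Set.Ioc (0 : ℝ) T →
      mittagLeffler α (-(lam * t ^ α)) / (γ + mittagLeffler α (-(lam * T ^ α)))
        ≤ min γ⁻¹ (c * t ^ (-α)) := by
  have hΓ : 0 < Real.Gamma (1 - α) := Real.Gamma_pos_of_pos (sub_pos.2 hα.2)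
  have hΓ' : 0 < Real.Gamma (α + 1) := Real.Gamma_pos_of_pos (by linarith [hα.1])
  refine ⟨(1 + Real.Gamma (1 - α) * Real.Gamma (α + 1)) * T ^ α, by positivity,
    fun γ hγ lam hlam t ht => ?_⟩
  have htα : 0 < t ^ α := Real.rpow_pos_of_pos ht.1 α
  have hT_pos : 0 < mittagLeffler α (-(lam * T ^ α)) :=
    mittagLeffler_pos_of_nonpos hα (neg_nonpos.2 (by positivity))
  have ht_le_one : mittagLeffler α (-(lam * t ^ α)) ≤ 1 :=
    mittagLeffler_le_one_of_nonpos hα (neg_nonpos.2 (by positivity))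
  have hcompare := mul_mittagLeffler_neg_mul_le hα hlam htα.le
    (Real.rpow_le_rpow ht.1.le ht.2 hα.1.le)
  refine le_min ?_ ?_
  · rw [← one_div]
    exact div_le_div₀ zero_le_one ht_le_one hγ (le_add_of_nonneg_right hT_pos.le)
  · rw [div_le_iff₀ (by positivity), Real.rpow_neg ht.1.le, ← div_eq_mul_inv,
      div_mul_eq_mul_div, le_div_iff₀' htα]
    exact hcompare.trans (by gcongr; exact le_add_of_nonneg_left hγ.le)
end

section
/- Let α ∈ (0,1), T > 0, γ > 0, δ > 0. Let {λ_j} be positive reals, m_j := E_{α,1}(-λ_j T^α), and for t ∈ [0,T] let w_j(t) := E_{α,1}(-λ_j t^α). If g, g^δ ∈ ℓ² with ‖g − g^δ‖ ≤ δ, then for every t ∈ (0,T], ‖(w_j(t)/(γ + m_j)) (g_j − g^δ_j)‖_{ℓ²} ≤ c δ min(γ^{-1}, t^{-α}), with c depending only on α, T. -/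
/-!
The function `t ^ (α - 1) * E_{α,α}(-λ t ^ α)` is the resolvent of the Riemann–Liouville kernel
`t ^ (α - 1) / Γ(α)`. For `0 < α ≤ 1` this kernel is logarithmically convex, and resolvents of such
kernels are positive. Integrating the positive resolvent to order `1` shows that
`E_{α,1}(-λ t ^ α)` decreases in `t`; to order `1 - α` it gives the lower bound
`1 / (1 + Γ(1 - α) z) ≤ E_{α,1}(-z)`, and integrating `E_{α,1}(-λ t ^ α)` to order `α` gives the
upper bound `E_{α,1}(-z) ≤ 1 / (1 + z / Γ(1 + α))`. Hence
`E_{α,1}(-λ t ^ α) / (γ + E_{α,1}(-λ T ^ α))` is at most `1 / γ`, and at most a constant times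
`(1 + λ T ^ α) / (1 + λ t ^ α)`, which is of order `t ^ (-α)` uniformly in `λ`.
-/

open Filter MeasureTheory Set Topology

section LogConvexKernel

/-- Positive, decreasing, logarithmically convex, locally integrable convolution kernels on
`(0, ∞)`, such as `t ^ (α - 1)` with `0 < α ≤ 1`: the class for which Volterra equations have
positive resolvents. Log-convexity is encoded as monotonicity of `t ↦ k t / k (t - s)`, with the
denominators cleared. -/
structure IsLogConvexKernel (k : ℝ → ℝ) : Prop where
  pos : ∀ ⦃t⦄, 0 < t → 0 < k t
  antitoneOn : AntitoneOn k (Ioi 0)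
  mul_le_mul : ∀ ⦃s t t'⦄, 0 < s → s < t → t < t' → k t * k (t' - s) ≤ k t' * k (t - s)
  intervalIntegrable : ∀ ⦃t⦄, 0 < t → IntervalIntegrable k volume 0 t

/-- `r` is the resolvent of the kernel `k` with parameter `lam`: the solution of the Volterra
equation `r + lam • (k ∗ r) = k` on `(0, ∞)`, where `∗` is the convolution of causal functions.
The integrability field makes that convolution meaningful. -/
structure IsResolvent (lam : ℝ) (k r : ℝ → ℝ) : Prop where
  continuousOn : ContinuousOn r (Ioi 0)
  intervalIntegrable : ∀ ⦃t⦄, 0 < t → IntervalIntegrable (fun s ↦ k (t - s) * r s) volume 0 t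
  add_integral_eq : ∀ ⦃t⦄, 0 < t → r t + lam * ∫ s in 0..t, k (t - s) * r s = k t

variable {k r : ℝ → ℝ} {lam t t' : ℝ}

lemma IsLogConvexKernel.mul_integral_le (hk : IsLogConvexKernel k) (ht : 0 < t) (htt' : t < t')
    (hint : IntervalIntegrable (fun s ↦ k (t - s) * r s) volume 0 t)
    (hint' : IntervalIntegrable (fun s ↦ k (t' - s) * r s) volume 0 t)
    (hr : ∀ s ∈ Ioo 0 t, 0 ≤ r s) :
    k t * ∫ s in 0..t, k (t' - s) * r s ≤ k t' * ∫ s in 0..t, k (t - s) * r s := by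
  rw [← intervalIntegral.integral_const_mul, ← intervalIntegral.integral_const_mul]
  refine intervalIntegral.integral_mono_on_of_le_Ioo ht.le (hint'.const_mul _)
    (hint.const_mul _) fun s hs ↦ ?_
  rw [← mul_assoc, ← mul_assoc]
  exact mul_le_mul_of_nonneg_right (hk.mul_le_mul hs.1 hs.2 htt') (hr s hs)

lemma IsLogConvexKernel.integral_mul_le (hk : IsLogConvexKernel k) {M : ℝ} (htt' : t < t')
    (hint : IntervalIntegrable (fun s ↦ k (t' - s) * r s) volume t t')
    (hM : ∀ s ∈ Icc t t', r s ≤ M) :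
    ∫ s in t..t', k (t' - s) * r s ≤ (∫ s in 0..t' - t, k s) * M := by
  have hk_int : IntervalIntegrable (fun s ↦ k (t' - s)) volume t t' := by
    simpa using ((hk.intervalIntegrable (sub_pos.2 htt')).comp_sub_left t').symm
  calc ∫ s in t..t', k (t' - s) * r s ≤ ∫ s in t..t', k (t' - s) * M :=
        intervalIntegral.integral_mono_on_of_le_Ioo htt'.le hint (hk_int.mul_const M)
          fun s hs ↦ mul_le_mul_of_nonneg_left (hM s (Ioo_subset_Icc_self hs))
            (hk.pos (sub_pos.2 hs.2)).le
    _ = (∫ s in 0..t' - t, k s) * M := by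
        rw [intervalIntegral.integral_mul_const,
          intervalIntegral.integral_comp_sub_left, sub_self]

lemma IsLogConvexKernel.integral_le_integral (hk : IsLogConvexKernel k) (ht : 0 ≤ t)
    (htt' : t ≤ t') (ht' : 0 < t') : ∫ s in 0..t, k s ≤ ∫ s in 0..t', k s := by
  refine intervalIntegral.integral_mono_interval le_rfl ht htt' ?_ (hk.intervalIntegrable ht')
  filter_upwards [ae_restrict_mem measurableSet_Ioc] with s hs using (hk.pos hs.1).le

lemma IsLogConvexKernel.exists_mul_integral_lt (hk : IsLogConvexKernel k) {ε b : ℝ} (hε : 0 < ε)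
    (hb : 0 < b) (lam : ℝ) : ∃ d ∈ Ioo 0 b, lam * ∫ s in 0..d, k s < ε := by
  have hprim : ContinuousWithinAt (fun x ↦ lam * ∫ s in 0..x, k s) (Ioi 0) 0 := by
    have h := intervalIntegral.continuousOn_primitive_interval' (hk.intervalIntegrable hb)
      left_mem_uIcc 0 left_mem_uIcc
    rw [uIcc_of_le hb.le] at h
    exact continuousWithinAt_const.mul
      ((h.mono Ioc_subset_Icc_self).mono_of_mem_nhdsWithin (Ioc_mem_nhdsGT hb))
  have hlim : ∀ᶠ x in 𝓝[>] 0, lam * ∫ s in 0..x, k s < ε :=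
    hprim.eventually_lt_const (by simpa using hε)
  obtain ⟨d, hd, hdb⟩ := (hlim.and (Ioo_mem_nhdsGT hb)).exists
  exact ⟨d, hdb, hd⟩

lemma IsResolvent.mul_integral_le (hk : IsLogConvexKernel k) (hr : IsResolvent lam k r)
    (hlam : 0 ≤ lam) (ht : 0 < t) (htt' : t < t') (hpos : ∀ s ∈ Ioo 0 t, 0 ≤ r s) :
    k t * (lam * ∫ s in 0..t, k (t' - s) * r s) ≤ k t' * (k t - r t) := by
  have ht' : 0 < t' := ht.trans htt'
  have hint' : IntervalIntegrable (fun s ↦ k (t' - s) * r s) volume 0 t :=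
    (hr.intervalIntegrable ht').mono_set <|
      uIcc_subset_uIcc_left (by rw [uIcc_of_le ht'.le]; exact ⟨ht.le, htt'.le⟩)
  calc k t * (lam * ∫ s in 0..t, k (t' - s) * r s)
      = lam * (k t * ∫ s in 0..t, k (t' - s) * r s) := mul_left_comm _ _ _
    _ ≤ lam * (k t' * ∫ s in 0..t, k (t - s) * r s) :=
        mul_le_mul_of_nonneg_left
          (hk.mul_integral_le ht htt' (hr.intervalIntegrable ht) hint' hpos) hlam
    _ = k t' * (k t - r t) := by rw [← hr.add_integral_eq ht]; ring

lemma exists_mem_Ico_isMaxOn_of_lt {f : ℝ → ℝ} {a b : ℝ} (hab : a ≤ b)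
    (hf : ContinuousOn f (Icc a b)) (hlt : f b < f a) : ∃ c ∈ Ico a b, IsMaxOn f (Icc a b) c := by
  obtain ⟨c, ⟨hac, hcb⟩, hmax⟩ := isCompact_Icc.exists_isMaxOn (nonempty_Icc.2 hab) hf
  refine ⟨c, ⟨hac, hcb.lt_of_ne ?_⟩, hmax⟩
  rintro rfl
  exact hlt.not_ge (hmax (left_mem_Icc.2 hab))

/- Compare the equation at `t` with the one at the point `t₁` where `r` is largest on `[t - d, t]`.
By log-convexity the memory of `[0, t₁]` has decayed by at least the factor `k t / k t₁`, and the
memory of `[t₁, t]` is at most `r t₁ * ∫ s in 0..d, k s`, too little to bring `r` down to zero. -/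
lemma IsResolvent.pos_of_forall_Ioo_pos (hk : IsLogConvexKernel k) (hr : IsResolvent lam k r)
    (hlam : 0 ≤ lam) (ht : 0 < t) (hpos : ∀ s ∈ Ioo 0 t, 0 < r s) : 0 < r t := by
  by_contra! hrt
  have hkt := hk.pos ht
  have hkt_half := hk.pos (half_pos ht)
  obtain ⟨d, ⟨hd, hdt⟩, hsmall⟩ := hk.exists_mul_integral_lt
    (div_pos hkt hkt_half) (half_pos ht) lam
  have hrd : 0 < r (t - d) := hpos _ ⟨by linarith, by linarith⟩
  obtain ⟨t₁, ⟨hdt₁, ht₁⟩, hmax⟩ := exists_mem_Ico_isMaxOn_of_lt (sub_le_self t hd.le)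
    (hr.continuousOn.mono fun s hs ↦ (by linarith [hs.1] : 0 < s)) (hrt.trans_lt hrd)
  have hrt₁ : 0 < r t₁ := hrd.trans_le (hmax (left_mem_Icc.2 (sub_le_self t hd.le)))
  have ht₁_pos : 0 < t₁ := by linarith
  have hkt₁ := hk.pos ht₁_pos
  have hmem : t₁ ∈ uIcc 0 t := by rw [uIcc_of_le ht.le]; exact ⟨ht₁_pos.le, ht₁.le⟩
  have hint_left := (hr.intervalIntegrable ht).mono_set (uIcc_subset_uIcc_left hmem)
  have hint_right := (hr.intervalIntegrable ht).mono_set (uIcc_subset_uIcc_right hmem)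
  have hold : k t₁ * (lam * ∫ s in 0..t₁, k (t - s) * r s) ≤ k t * (k t₁ - r t₁) :=
    hr.mul_integral_le hk hlam ht₁_pos ht₁ fun s hs ↦ (hpos s ⟨hs.1, hs.2.trans ht₁⟩).le
  have hrecent : k t₁ * (lam * ∫ s in t₁..t, k (t - s) * r s) < k t * r t₁ :=
    calc k t₁ * (lam * ∫ s in t₁..t, k (t - s) * r s)
        ≤ k t₁ * (lam * ((∫ s in 0..d, k s) * r t₁)) := by
          gcongr
          refine (hk.integral_mul_le ht₁ hint_right fun s hs ↦ hmax ⟨hdt₁.trans hs.1, hs.2⟩).trans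
            (mul_le_mul_of_nonneg_right ?_ hrt₁.le)
          exact hk.integral_le_integral (by linarith) (by linarith) hd
      _ = k t₁ * (lam * ∫ s in 0..d, k s) * r t₁ := by ring
      _ < k t₁ * (k t / k (t / 2)) * r t₁ := by gcongr
      _ ≤ k (t / 2) * (k t / k (t / 2)) * r t₁ := by
          gcongr
          exact hk.antitoneOn (half_pos ht) ht₁_pos (by linarith)
      _ = k t * r t₁ := by rw [mul_div_cancel₀ _ hkt_half.ne']
  have heq := hr.add_integral_eq ht
  rw [← intervalIntegral.integral_add_adjacent_intervals hint_left hint_right] at heq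
  have : k t₁ * k t ≤ k t₁ * (lam * ∫ s in 0..t₁, k (t - s) * r s)
      + k t₁ * (lam * ∫ s in t₁..t, k (t - s) * r s) := by
    rw [← mul_add, ← mul_add]
    gcongr
    linarith
  linarith

lemma pos_of_continuousOn_of_forall_Ioo_pos {f : ℝ → ℝ} (hf : ContinuousOn f (Ioi 0))
    (hf₀ : ∀ᶠ t in 𝓝[>] 0, 0 < f t)
    (hstep : ∀ t, 0 < t → (∀ s ∈ Ioo 0 t, 0 < f s) → 0 < f t) (ht : 0 < t) : 0 < f t := by
  obtain ⟨ε, hε, hfε⟩ := mem_nhdsGT_iff_exists_Ioo_subset.1 hf₀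
  by_contra! hft
  have hεt : ε ≤ t := not_lt.1 fun h ↦ hft.not_gt (hfε ⟨ht, h⟩)
  have hf_Icc : ContinuousOn f (Icc ε t) := hf.mono fun s hs ↦ hε.trans_le hs.1
  have hcompact : IsCompact (Icc ε t ∩ f ⁻¹' Iic 0) :=
    isCompact_Icc.of_isClosed_subset
      (hf_Icc.preimage_isClosed_of_isClosed isClosed_Icc isClosed_Iic) inter_subset_left
  obtain ⟨t₀, ⟨⟨hεt₀, ht₀t⟩, hft₀⟩, hleast⟩ := hcompact.exists_isLeast ⟨t, ⟨hεt, le_rfl⟩, hft⟩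
  refine (hstep t₀ (hε.trans_le hεt₀) fun s hs ↦ ?_).not_ge hft₀
  rcases lt_or_ge s ε with hsε | hεs
  · exact hfε ⟨hs.1, hsε⟩
  · by_contra! hfs
    exact hs.2.not_ge (hleast ⟨⟨hεs, hs.2.le.trans ht₀t⟩, hfs⟩)

theorem IsResolvent.pos (hk : IsLogConvexKernel k) (hr : IsResolvent lam k r) (hlam : 0 ≤ lam)
    (hr₀ : ∀ᶠ t in 𝓝[>] 0, 0 < r t) (ht : 0 < t) : 0 < r t :=
  pos_of_continuousOn_of_forall_Ioo_pos hr.continuousOn hr₀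
    (fun _ hs ↦ hr.pos_of_forall_Ioo_pos hk hlam hs) ht

end LogConvexKernel

section Series

lemma exp_mul_rpow_div_le_Gamma {M x : ℝ} (hM : 0 < M) (hx : 0 < x) :
    Real.exp (-(M + 1)) * M ^ x / (M + 1) ≤ Real.Gamma x := by
  have hint := Real.GammaIntegral_convergent hx
  have hsub : Ioc M (M + 1) ⊆ Ioi 0 := fun s hs ↦ hM.trans hs.1
  calc Real.exp (-(M + 1)) * M ^ x / (M + 1)
      = ∫ _ in Ioc M (M + 1), Real.exp (-(M + 1)) * M ^ x / (M + 1) := by simp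
    _ ≤ ∫ s in Ioc M (M + 1), Real.exp (-s) * s ^ (x - 1) := by
        refine setIntegral_mono_on (by simp) (hint.mono_set hsub) measurableSet_Ioc fun s hs ↦ ?_
        have hs₀ : 0 < s := hsub hs
        obtain ⟨hMs, hsM⟩ := hs
        rw [Real.rpow_sub_one hs₀.ne', mul_div_assoc]
        gcongr
    _ ≤ ∫ s in Ioi 0, Real.exp (-s) * s ^ (x - 1) := by
        refine setIntegral_mono_set hint ?_ hsub.eventuallyLE
        filter_upwards [ae_restrict_mem measurableSet_Ioi] with s (hs : 0 < s)
        exact mul_nonneg (Real.exp_pos _).le (Real.rpow_nonneg hs.le _)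
    _ = Real.Gamma x := (Real.Gamma_eq_integral hx).symm

/-- The two-parameter Mittag-Leffler function `E_{α,β}(z)`; `mittagLeffler α` is
`mittagLefflerTwo α 1` by definition. The second parameter is what makes the family stable under
fractional integration. -/
noncomputable def mittagLefflerTwo (α β z : ℝ) : ℝ :=
  ∑' k : ℕ, z ^ k / Real.Gamma (k * α + β)

variable {α β : ℝ}

lemma summable_mittagLefflerTwo (hα : 0 < α) (hβ : 0 < β) (z : ℝ) :
    Summable fun k : ℕ ↦ z ^ k / Real.Gamma (k * α + β) := by
  -- With `M ^ α = |z| + 1`, the bound `Γ(x) ≥ C * M ^ x` leaves a geometric series.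
  set M : ℝ := (|z| + 1) ^ α⁻¹
  have hM : 0 < M := by positivity
  have hMα : M ^ α = |z| + 1 := Real.rpow_inv_rpow (by positivity) hα.ne'
  have hgeom : Summable fun k : ℕ ↦
      (M + 1) * Real.exp (M + 1) / M ^ β * (|z| / (|z| + 1)) ^ k :=
    (summable_geometric_of_lt_one (by positivity)
      ((div_lt_one (by positivity)).2 (lt_add_one _))).mul_left _
  refine hgeom.of_norm_bounded fun k ↦ ?_
  have hΓ := exp_mul_rpow_div_le_Gamma hM (x := k * α + β) (by positivity)
  rw [Real.rpow_add hM, mul_comm (k : ℝ) α, Real.rpow_mul_natCast hM.le, hMα,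
    mul_comm α] at hΓ
  rw [norm_div, norm_pow, Real.norm_eq_abs,
    Real.norm_of_nonneg (Real.Gamma_nonneg_of_nonneg (by positivity))]
  calc |z| ^ k / Real.Gamma (k * α + β)
      ≤ |z| ^ k / (Real.exp (-(M + 1)) * ((|z| + 1) ^ k * M ^ β) / (M + 1)) := by gcongr
    _ = (M + 1) * Real.exp (M + 1) / M ^ β * (|z| / (|z| + 1)) ^ k := by
        rw [Real.exp_neg, div_pow]
        field_simp

lemma continuous_mittagLefflerTwo (hα : 0 < α) (hβ : 0 < β) :
    Continuous (mittagLefflerTwo α β) := by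
  refine continuous_iff_continuousAt.2 fun z ↦ ?_
  have hball : ContinuousOn (mittagLefflerTwo α β) (Metric.ball 0 (|z| + 1)) := by
    refine continuousOn_tsum (fun k ↦ by fun_prop)
      (summable_mittagLefflerTwo hα hβ (|z| + 1)) fun k x hx ↦ ?_
    have hx : |x| < |z| + 1 := by simpa using hx
    rw [norm_div, norm_pow, Real.norm_eq_abs,
      Real.norm_of_nonneg (Real.Gamma_nonneg_of_nonneg (by positivity))]
    gcongr
  exact hball.continuousAt (Metric.isOpen_ball.mem_nhds (by simp))

lemma mittagLefflerTwo_eq_add (hα : 0 < α) (hβ : 0 < β) (z : ℝ) :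
    mittagLefflerTwo α β z = 1 / Real.Gamma β + z * mittagLefflerTwo α (β + α) z := by
  unfold mittagLefflerTwo
  rw [(summable_mittagLefflerTwo hα hβ z).tsum_eq_zero_add, ← tsum_mul_left]
  congr 1
  · simp
  · congr 1 with k
    rw [show ((k + 1 : ℕ) : ℝ) * α + β = k * α + (β + α) by push_cast; ring, pow_succ']
    ring

end Series

section RiemannLiouville

/-- The kernel `t ^ (m - 1) / Γ(m)`: convolution with it is the Riemann–Liouville fractional
integral of order `m`. -/
noncomputable def rlKernel (m t : ℝ) : ℝ :=
  t ^ (m - 1) / Real.Gamma m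

variable {m b t : ℝ}

lemma rlKernel_pos (hm : 0 < m) (ht : 0 < t) : 0 < rlKernel m t :=
  div_pos (Real.rpow_pos_of_pos ht _) (Real.Gamma_pos_of_pos hm)

@[simp]
lemma rlKernel_one_left (t : ℝ) : rlKernel 1 t = 1 := by simp [rlKernel]

@[simp]
lemma rlKernel_one_right (m : ℝ) : rlKernel m 1 = (Real.Gamma m)⁻¹ := by simp [rlKernel]

lemma integral_rpow_mul_sub_rpow (hb : 0 < b) (hm : 0 < m) (ht : 0 < t) :
    ∫ s in 0..t, s ^ (b - 1) * (t - s) ^ (m - 1) =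
      t ^ (b + m - 1) * ProbabilityTheory.beta b m := by
  have hcomplex := Complex.betaIntegral_scaled b m ht
  have hcast : ∫ s in 0..t, (s : ℂ) ^ ((b : ℂ) - 1) * ((t : ℂ) - s) ^ ((m : ℂ) - 1) =
      ∫ s in 0..t, ((s ^ (b - 1) * (t - s) ^ (m - 1) : ℝ) : ℂ) := by
    refine intervalIntegral.integral_congr fun s hs ↦ ?_
    rw [uIcc_of_le ht.le] at hs
    simp only [Complex.ofReal_mul, Complex.ofReal_cpow hs.1,
      Complex.ofReal_cpow (sub_nonneg.2 hs.2), Complex.ofReal_sub, Complex.ofReal_one]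
  rw [hcast, intervalIntegral.integral_ofReal] at hcomplex
  rw [ProbabilityTheory.beta_eq_betaIntegralReal b m hb hm, ← Complex.re_ofReal_mul,
    Complex.ofReal_cpow ht.le]
  push_cast
  rw [← hcomplex, Complex.ofReal_re]

theorem integral_rlKernel_mul_rlKernel (hm : 0 < m) (hb : 0 < b) (ht : 0 < t) :
    ∫ s in 0..t, rlKernel m (t - s) * rlKernel b s = rlKernel (b + m) t := by
  calc ∫ s in 0..t, rlKernel m (t - s) * rlKernel b s
      = ∫ s in 0..t, (Real.Gamma m * Real.Gamma b)⁻¹ * (s ^ (b - 1) * (t - s) ^ (m - 1)) := by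
        refine intervalIntegral.integral_congr fun s _ ↦ ?_
        simp only [rlKernel]
        field_simp
    _ = rlKernel (b + m) t := by
        rw [intervalIntegral.integral_const_mul, integral_rpow_mul_sub_rpow hb hm ht, rlKernel,
          ProbabilityTheory.beta]
        field_simp

lemma intervalIntegrable_rlKernel_mul_rlKernel (hm : 0 < m) (hb : 0 < b) (ht : 0 < t) :
    IntervalIntegrable (fun s ↦ rlKernel m (t - s) * rlKernel b s) volume 0 t :=
  intervalIntegral.intervalIntegrable_of_integral_ne_zero <| by
    rw [integral_rlKernel_mul_rlKernel hm hb ht]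
    exact (rlKernel_pos (add_pos hb hm) ht).ne'

lemma isLogConvexKernel_rlKernel (hm : 0 < m) (hm₁ : m ≤ 1) : IsLogConvexKernel (rlKernel m) where
  pos _ := rlKernel_pos hm
  antitoneOn _ hs _ ht hst :=
    div_le_div_of_nonneg_right
      (Real.antitoneOn_rpow_Ioi_of_exponent_nonpos (sub_nonpos.2 hm₁) hs ht hst)
      (Real.Gamma_pos_of_pos hm).le
  mul_le_mul s t t' hs hst htt' := by
    have ht : 0 < t := hs.trans hst
    have ht' : 0 < t' := ht.trans htt'
    simp only [rlKernel, div_mul_div_comm]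
    rw [← Real.mul_rpow ht.le (by linarith), ← Real.mul_rpow ht'.le (by linarith)]
    refine div_le_div_of_nonneg_right ?_ (by positivity)
    refine Real.rpow_le_rpow_of_nonpos (mul_pos ht' (sub_pos.2 hst)) ?_ (sub_nonpos.2 hm₁)
    nlinarith
  intervalIntegrable t ht := by
    simpa using intervalIntegrable_rlKernel_mul_rlKernel one_pos hm ht

end RiemannLiouville


section MittagLefflerKernel

/-- The function `t ^ (β - 1) * E_{α,β}(z * t ^ α)`. For fixed `α` and `z`, fractional integration
of order `m` maps the function with parameter `β` to the one with parameter `β + m`. -/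
noncomputable def mittagLefflerKernel (α β z t : ℝ) : ℝ :=
  t ^ (β - 1) * mittagLefflerTwo α β (z * t ^ α)

variable {α β m t : ℝ}

lemma mittagLefflerKernel_one (α z t : ℝ) :
    mittagLefflerKernel α 1 z t = mittagLeffler α (z * t ^ α) := by
  simp [mittagLefflerKernel, mittagLefflerTwo, mittagLeffler]

lemma hasSum_mittagLefflerKernel (hα : 0 < α) (hβ : 0 < β) (z : ℝ) (ht : 0 < t) :
    HasSum (fun k : ℕ ↦ z ^ k * rlKernel (k * α + β) t) (mittagLefflerKernel α β z t) := by
  refine ((summable_mittagLefflerTwo hα hβ (z * t ^ α)).hasSum.mul_left (t ^ (β - 1))).congr_fun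
    fun k ↦ ?_
  rw [rlKernel, add_sub_assoc, Real.rpow_add ht, mul_comm (k : ℝ) α, Real.rpow_mul_natCast ht.le,
    mul_pow]
  ring

lemma continuousOn_mittagLefflerKernel (hα : 0 < α) (hβ : 0 < β) (z : ℝ) :
    ContinuousOn (mittagLefflerKernel α β z) (Ioi 0) := by
  have hrpow : ∀ p : ℝ, ContinuousOn (fun t : ℝ ↦ t ^ p) (Ioi 0) := fun p ↦
    continuousOn_id.rpow_const fun _ ht ↦ .inl (ne_of_gt ht)
  exact (hrpow _).mul
    ((continuous_mittagLefflerTwo hα hβ).comp_continuousOn (continuousOn_const.mul (hrpow _)))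

lemma mittagLefflerKernel_eq_add (hα : 0 < α) (hβ : 0 < β) (z : ℝ) (ht : 0 < t) :
    mittagLefflerKernel α β z t = rlKernel β t + z * mittagLefflerKernel α (β + α) z t := by
  rw [mittagLefflerKernel, mittagLefflerKernel, rlKernel, mittagLefflerTwo_eq_add hα hβ,
    add_sub_right_comm, Real.rpow_add ht]
  ring

lemma intervalIntegrable_rlKernel_mul_mittagLefflerKernel (hα : 0 < α) (hm : 0 < m) (hβ : 0 < β)
    (z : ℝ) (ht : 0 < t) :
    IntervalIntegrable (fun s ↦ rlKernel m (t - s) * mittagLefflerKernel α β z s) volume 0 t := by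
  have hcont : Continuous fun s : ℝ ↦ Real.Gamma β * mittagLefflerTwo α β (z * s ^ α) :=
    continuous_const.mul ((continuous_mittagLefflerTwo hα hβ).comp
      (continuous_const.mul (Real.continuous_rpow_const hα.le)))
  refine ((intervalIntegrable_rlKernel_mul_rlKernel hm hβ ht).mul_continuousOn
    hcont.continuousOn).congr fun s _ ↦ ?_
  simp only [rlKernel, mittagLefflerKernel]
  field_simp

theorem integral_rlKernel_mul_mittagLefflerKernel (hα : 0 < α) (hm : 0 < m) (hβ : 0 < β) (z : ℝ)
    (ht : 0 < t) :
    ∫ s in 0..t, rlKernel m (t - s) * mittagLefflerKernel α β z s =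
      mittagLefflerKernel α (β + m) z t := by
  have hpos : ∀ᵐ s, s ∈ uIoc 0 t → s < t ∧ 0 < s := by
    filter_upwards [Measure.ae_ne volume t] with s hst hs
    rw [uIoc_of_le ht.le] at hs
    exact ⟨hs.2.lt_of_ne hst, hs.1⟩
  have hsum : HasSum
      (fun k : ℕ ↦ ∫ s in 0..t, rlKernel m (t - s) * (z ^ k * rlKernel (k * α + β) s))
      (∫ s in 0..t, rlKernel m (t - s) * mittagLefflerKernel α β z s) := by
    refine intervalIntegral.hasSum_integral_of_dominated_convergence
      (fun k s ↦ rlKernel m (t - s) * (|z| ^ k * rlKernel (k * α + β) s))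
      (fun k ↦ ?_) (fun k ↦ ?_) ?_ ?_ ?_
    · refine Measurable.aestronglyMeasurable ?_
      unfold rlKernel
      fun_prop
    · filter_upwards [hpos] with s hs hs_mem
      obtain ⟨hst, hs₀⟩ := hs hs_mem
      have hk := rlKernel_pos (m := k * α + β) (by positivity) hs₀
      rw [norm_mul, norm_mul, norm_pow, Real.norm_eq_abs z,
        Real.norm_of_nonneg (rlKernel_pos hm (sub_pos.2 hst)).le, Real.norm_of_nonneg hk.le]
    · filter_upwards [hpos] with s hs hs_mem
      exact (hasSum_mittagLefflerKernel hα hβ |z| (hs hs_mem).2).summable.mul_left _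
    · refine (intervalIntegrable_rlKernel_mul_mittagLefflerKernel hα hm hβ |z| ht).congr_ae ?_
      rw [EventuallyEq, ae_restrict_iff' measurableSet_uIoc]
      filter_upwards [hpos] with s hs hs_mem
      exact ((hasSum_mittagLefflerKernel hα hβ |z| (hs hs_mem).2).mul_left _).tsum_eq.symm
    · filter_upwards [hpos] with s hs hs_mem
      exact (hasSum_mittagLefflerKernel hα hβ z (hs hs_mem).2).mul_left _
  refine hsum.unique
    ((hasSum_mittagLefflerKernel hα (add_pos hβ hm) z ht).congr_fun fun k ↦ ?_)
  simp only [mul_left_comm _ (z ^ k)]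
  rw [intervalIntegral.integral_const_mul,
    integral_rlKernel_mul_rlKernel hm (by positivity) ht, add_assoc]

lemma isResolvent_mittagLefflerKernel (hα : 0 < α) (lam : ℝ) :
    IsResolvent lam (rlKernel α) (mittagLefflerKernel α α (-lam)) where
  continuousOn := continuousOn_mittagLefflerKernel hα hα _
  intervalIntegrable _ := intervalIntegrable_rlKernel_mul_mittagLefflerKernel hα hα hα _
  add_integral_eq t ht := by
    rw [integral_rlKernel_mul_mittagLefflerKernel hα hα hα _ ht,
      mittagLefflerKernel_eq_add hα hα _ ht]
    ring

lemma eventually_mittagLefflerKernel_pos (hα : 0 < α) (hβ : 0 < β) (z : ℝ) :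
    ∀ᶠ t in 𝓝[>] 0, 0 < mittagLefflerKernel α β z t := by
  have hcont : Continuous fun t : ℝ ↦ mittagLefflerTwo α β (z * t ^ α) :=
    (continuous_mittagLefflerTwo hα hβ).comp
      (continuous_const.mul (Real.continuous_rpow_const hα.le))
  have hzero : 0 < mittagLefflerTwo α β (z * 0 ^ α) := by
    simp [mittagLefflerTwo_eq_add hα hβ, Real.zero_rpow hα.ne', Real.Gamma_pos_of_pos hβ]
  filter_upwards [self_mem_nhdsWithin,
    mem_nhdsWithin_of_mem_nhds (hcont.continuousAt.eventually_const_lt hzero)] with t ht hEt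
  exact mul_pos (Real.rpow_pos_of_pos ht _) hEt

theorem mittagLefflerKernel_pos (hα : 0 < α) (hα₁ : α ≤ 1) {lam : ℝ} (hlam : 0 ≤ lam)
    (ht : 0 < t) : 0 < mittagLefflerKernel α α (-lam) t :=
  (isResolvent_mittagLefflerKernel hα lam).pos (isLogConvexKernel_rlKernel hα hα₁) hlam
    (eventually_mittagLefflerKernel_pos hα hα _) ht

end MittagLefflerKernel

section MittagLefflerBounds

variable {α lam z t T : ℝ}

lemma intervalIntegrable_mittagLefflerKernel (hα : 0 < α) (z : ℝ) (ht : 0 < t) :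
    IntervalIntegrable (mittagLefflerKernel α α z) volume 0 t := by
  simpa using intervalIntegrable_rlKernel_mul_mittagLefflerKernel hα one_pos hα z ht

lemma mul_integral_mittagLefflerKernel (hα : 0 < α) (lam : ℝ) (ht : 0 < t) :
    lam * ∫ s in 0..t, mittagLefflerKernel α α (-lam) s =
      1 - mittagLeffler α (-(lam * t ^ α)) := by
  have hint := integral_rlKernel_mul_mittagLefflerKernel hα one_pos hα (-lam) ht
  have hrec := mittagLefflerKernel_eq_add hα one_pos (-lam) ht
  simp only [rlKernel_one_left, one_mul] at hint
  rw [mittagLefflerKernel_one, rlKernel_one_left, neg_mul, add_comm 1 α] at hrec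
  rw [hint, hrec]
  ring

lemma antitoneOn_mittagLeffler_neg_mul_rpow (hα : 0 < α) (hα₁ : α ≤ 1) (hlam : 0 ≤ lam) :
    AntitoneOn (fun t ↦ mittagLeffler α (-(lam * t ^ α))) (Ioi 0) := by
  intro s (hs : 0 < s) t (ht : 0 < t) hst
  have hmono : ∫ u in 0..s, mittagLefflerKernel α α (-lam) u ≤
      ∫ u in 0..t, mittagLefflerKernel α α (-lam) u := by
    refine intervalIntegral.integral_mono_interval le_rfl hs.le hst ?_
      (intervalIntegrable_mittagLefflerKernel hα _ ht)
    filter_upwards [ae_restrict_mem measurableSet_Ioc] with u hu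
    exact (mittagLefflerKernel_pos hα hα₁ hlam hu.1).le
  have h := mul_le_mul_of_nonneg_left hmono hlam
  rw [mul_integral_mittagLefflerKernel hα _ hs, mul_integral_mittagLefflerKernel hα _ ht] at h
  exact (sub_le_sub_iff_left 1).1 h

theorem inv_one_add_Gamma_mul_le_mittagLeffler_neg (hα : 0 < α) (hα₁ : α < 1) (hz : 0 ≤ z) :
    (1 + Real.Gamma (1 - α) * z)⁻¹ ≤ mittagLeffler α (-z) := by
  have hα' : 0 < 1 - α := sub_pos.2 hα₁
  have hΓ : 0 < Real.Gamma (1 - α) := Real.Gamma_pos_of_pos hα'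
  have hker : (Real.Gamma (1 - α))⁻¹ * ∫ s in 0..1, mittagLefflerKernel α α (-z) s ≤
      mittagLeffler α (-z) :=
    calc (Real.Gamma (1 - α))⁻¹ * ∫ s in 0..1, mittagLefflerKernel α α (-z) s
        = ∫ s in 0..1, (Real.Gamma (1 - α))⁻¹ * mittagLefflerKernel α α (-z) s := by
          rw [intervalIntegral.integral_const_mul]
      _ ≤ ∫ s in 0..1, rlKernel (1 - α) (1 - s) * mittagLefflerKernel α α (-z) s := by
          refine intervalIntegral.integral_mono_on_of_le_Ioo zero_le_one
            ((intervalIntegrable_mittagLefflerKernel hα _ one_pos).const_mul _)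
            (intervalIntegrable_rlKernel_mul_mittagLefflerKernel hα hα' hα _ one_pos)
            fun s hs ↦ ?_
          rw [← rlKernel_one_right]
          refine mul_le_mul_of_nonneg_right ?_ (mittagLefflerKernel_pos hα hα₁.le hz hs.1).le
          exact (isLogConvexKernel_rlKernel hα' (sub_le_self 1 hα.le)).antitoneOn
            (sub_pos.2 hs.2) (mem_Ioi.2 one_pos) (sub_le_self 1 hs.1.le)
      _ = mittagLeffler α (-z) := by
          rw [integral_rlKernel_mul_mittagLefflerKernel hα hα' hα _ one_pos,
            add_sub_cancel, mittagLefflerKernel_one, Real.one_rpow, mul_one]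
  have hmass := mul_integral_mittagLefflerKernel hα z one_pos
  rw [Real.one_rpow, mul_one] at hmass
  rw [inv_le_iff_one_le_mul₀ (by positivity)]
  rw [inv_mul_le_iff₀ hΓ] at hker
  linarith [mul_le_mul_of_nonneg_left hker hz]

theorem mittagLeffler_neg_le_inv_one_add_div (hα : 0 < α) (hα₁ : α ≤ 1) (hz : 0 ≤ z) :
    mittagLeffler α (-z) ≤ (1 + z / Real.Gamma (1 + α))⁻¹ := by
  have hker : mittagLeffler α (-z) * (Real.Gamma (1 + α))⁻¹ ≤
      mittagLefflerKernel α (1 + α) (-z) 1 :=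
    calc mittagLeffler α (-z) * (Real.Gamma (1 + α))⁻¹
        = ∫ s in 0..1, mittagLeffler α (-z) * (rlKernel α (1 - s) * rlKernel 1 s) := by
          rw [intervalIntegral.integral_const_mul,
            integral_rlKernel_mul_rlKernel hα one_pos one_pos, rlKernel_one_right]
      _ ≤ ∫ s in 0..1, rlKernel α (1 - s) * mittagLefflerKernel α 1 (-z) s := by
          refine intervalIntegral.integral_mono_on_of_le_Ioo zero_le_one
            ((intervalIntegrable_rlKernel_mul_rlKernel hα one_pos one_pos).const_mul _)
            (intervalIntegrable_rlKernel_mul_mittagLefflerKernel hα hα one_pos _ one_pos)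
            fun s hs ↦ ?_
          have hanti : mittagLeffler α (-z) ≤ mittagLeffler α (-z * s ^ α) := by
            simpa using antitoneOn_mittagLeffler_neg_mul_rpow hα hα₁ hz hs.1
              (mem_Ioi.2 one_pos) hs.2.le
          rw [rlKernel_one_left, mul_one, mittagLefflerKernel_one, mul_comm]
          exact mul_le_mul_of_nonneg_left hanti (rlKernel_pos hα (sub_pos.2 hs.2)).le
      _ = mittagLefflerKernel α (1 + α) (-z) 1 :=
          integral_rlKernel_mul_mittagLefflerKernel hα hα one_pos _ one_pos
  have hrec := mittagLefflerKernel_eq_add hα one_pos (-z) one_pos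
  rw [mittagLefflerKernel_one, rlKernel_one_left, Real.one_rpow, mul_one] at hrec
  rw [← div_eq_mul_inv] at hker
  rw [← one_div, le_div_iff₀ (by positivity), mul_one_add, mul_div_left_comm]
  linarith [mul_le_mul_of_nonneg_left hker hz]

lemma mittagLeffler_neg_pos (hα : α ∈ Ioo 0 1) (hz : 0 ≤ z) : 0 < mittagLeffler α (-z) := by
  have hΓ : 0 < Real.Gamma (1 - α) := Real.Gamma_pos_of_pos (sub_pos.2 hα.2)
  exact (by positivity : 0 < (1 + Real.Gamma (1 - α) * z)⁻¹).trans_le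
    (inv_one_add_Gamma_mul_le_mittagLeffler_neg hα.1 hα.2 hz)

lemma mittagLeffler_neg_le_one (hα : 0 < α) (hα₁ : α ≤ 1) (hz : 0 ≤ z) :
    mittagLeffler α (-z) ≤ 1 :=
  (mittagLeffler_neg_le_inv_one_add_div hα hα₁ hz).trans
    (inv_le_one_of_one_le₀ (le_add_of_nonneg_right (by positivity)))

lemma one_le_Gamma_one_add_mul_Gamma_one_sub (hα : α ∈ Ioo 0 1) :
    1 ≤ Real.Gamma (1 + α) * Real.Gamma (1 - α) := by
  have hΓ : 0 < Real.Gamma (1 + α) := Real.Gamma_pos_of_pos (by linarith [hα.1])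
  have hΓ' : 0 < Real.Gamma (1 - α) := Real.Gamma_pos_of_pos (sub_pos.2 hα.2)
  have h := (inv_one_add_Gamma_mul_le_mittagLeffler_neg hα.1 hα.2 zero_le_one).trans
    (mittagLeffler_neg_le_inv_one_add_div hα.1 hα.2.le zero_le_one)
  rwa [inv_le_inv₀ (by positivity) (by positivity), add_le_add_iff_left, mul_one,
    div_le_iff₀' hΓ] at h

lemma mittagLeffler_div_mittagLeffler_le (hα : α ∈ Ioo 0 1) (hlam : 0 ≤ lam) (ht : t ∈ Ioc 0 T) :
    mittagLeffler α (-(lam * t ^ α)) / mittagLeffler α (-(lam * T ^ α)) ≤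
      Real.Gamma (1 + α) * Real.Gamma (1 - α) * T ^ α * t ^ (-α) := by
  have htα : 0 < t ^ α := Real.rpow_pos_of_pos ht.1 _
  have htT : t ^ α ≤ T ^ α := Real.rpow_le_rpow ht.1.le ht.2 hα.1.le
  have hTα : 0 < T ^ α := htα.trans_le htT
  have hΓ : 0 < Real.Gamma (1 + α) := Real.Gamma_pos_of_pos (by linarith [hα.1])
  have hΓ' : 0 < Real.Gamma (1 - α) := Real.Gamma_pos_of_pos (sub_pos.2 hα.2)
  have hG := one_le_Gamma_one_add_mul_Gamma_one_sub hα
  calc mittagLeffler α (-(lam * t ^ α)) / mittagLeffler α (-(lam * T ^ α))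
      ≤ (1 + lam * t ^ α / Real.Gamma (1 + α))⁻¹ / (1 + Real.Gamma (1 - α) * (lam * T ^ α))⁻¹ :=
        div_le_div₀ (by positivity)
          (mittagLeffler_neg_le_inv_one_add_div hα.1 hα.2.le (by positivity)) (by positivity)
          (inv_one_add_Gamma_mul_le_mittagLeffler_neg hα.1 hα.2 (by positivity))
    _ = (1 + Real.Gamma (1 - α) * (lam * T ^ α)) / (1 + lam * t ^ α / Real.Gamma (1 + α)) := by
        rw [inv_div_inv]
    _ ≤ Real.Gamma (1 + α) * Real.Gamma (1 - α) * T ^ α * t ^ (-α) := by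
        rw [div_le_iff₀ (by positivity)]
        calc 1 + Real.Gamma (1 - α) * (lam * T ^ α)
            ≤ Real.Gamma (1 + α) * Real.Gamma (1 - α) * (T ^ α / t ^ α) +
                Real.Gamma (1 - α) * (lam * T ^ α) := by
              gcongr
              exact one_le_mul_of_one_le_of_one_le hG ((one_le_div htα).2 htT)
          _ = Real.Gamma (1 + α) * Real.Gamma (1 - α) * T ^ α * t ^ (-α) *
                (1 + lam * t ^ α / Real.Gamma (1 + α)) := by
              rw [Real.rpow_neg ht.1.le]
              field_simp

end MittagLefflerBounds

section FilterFactor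

variable {ι : Type*} {α γ lam t T K δ : ℝ}

lemma mittagLeffler_div_add_mittagLeffler_le (hα : α ∈ Ioo 0 1) (hγ : 0 < γ) (hlam : 0 ≤ lam)
    (ht : t ∈ Ioc 0 T) :
    mittagLeffler α (-(lam * t ^ α)) / (γ + mittagLeffler α (-(lam * T ^ α))) ≤
      max 1 (Real.Gamma (1 + α) * Real.Gamma (1 - α) * T ^ α) * min γ⁻¹ (t ^ (-α)) := by
  have hT : 0 < T := ht.1.trans_le ht.2
  have hz : 0 ≤ lam * t ^ α := mul_nonneg hlam (Real.rpow_nonneg ht.1.le _)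
  have hw := (mittagLeffler_neg_pos hα hz).le
  have hm := mittagLeffler_neg_pos hα (mul_nonneg hlam (Real.rpow_nonneg hT.le α))
  rw [mul_min_of_nonneg _ _ (zero_le_one.trans (le_max_left _ _))]
  refine le_min ?_ ?_
  · calc mittagLeffler α (-(lam * t ^ α)) / (γ + mittagLeffler α (-(lam * T ^ α)))
        ≤ 1 / γ := div_le_div₀ zero_le_one (mittagLeffler_neg_le_one hα.1 hα.2.le hz) hγ
          (le_add_of_nonneg_right hm.le)
      _ = 1 * γ⁻¹ := by rw [one_mul, one_div]
      _ ≤ max 1 (Real.Gamma (1 + α) * Real.Gamma (1 - α) * T ^ α) * γ⁻¹ := by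
          gcongr
          exact le_max_left _ _
  · calc mittagLeffler α (-(lam * t ^ α)) / (γ + mittagLeffler α (-(lam * T ^ α)))
        ≤ mittagLeffler α (-(lam * t ^ α)) / mittagLeffler α (-(lam * T ^ α)) :=
          div_le_div_of_nonneg_left hw hm (le_add_of_nonneg_left hγ.le)
      _ ≤ Real.Gamma (1 + α) * Real.Gamma (1 - α) * T ^ α * t ^ (-α) :=
          mittagLeffler_div_mittagLeffler_le hα hlam ht
      _ ≤ max 1 (Real.Gamma (1 + α) * Real.Gamma (1 - α) * T ^ α) * t ^ (-α) := by
          have := Real.rpow_nonneg ht.1.le (-α)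
          gcongr
          exact le_max_right _ _

lemma sqrt_tsum_sq_mul_le {a x : ι → ℝ} (hK : 0 ≤ K) (ha : ∀ j, |a j| ≤ K)
    (hx : Summable fun j ↦ x j ^ 2) :
    √(∑' j, (a j * x j) ^ 2) ≤ K * √(∑' j, x j ^ 2) := by
  have hterm : ∀ j, (a j * x j) ^ 2 ≤ K ^ 2 * x j ^ 2 := fun j ↦ by
    rw [mul_pow]
    exact mul_le_mul_of_nonneg_right (sq_le_sq.2 ((ha j).trans (le_abs_self K))) (sq_nonneg _)
  have hdom : Summable fun j ↦ K ^ 2 * x j ^ 2 := hx.mul_left _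
  have hsum : ∑' j, (a j * x j) ^ 2 ≤ ∑' j, K ^ 2 * x j ^ 2 :=
    (hdom.of_nonneg_of_le (fun j ↦ sq_nonneg _) hterm).tsum_le_tsum hterm hdom
  calc √(∑' j, (a j * x j) ^ 2) ≤ √(K ^ 2 * ∑' j, x j ^ 2) := by
        rw [← tsum_mul_left]
        exact Real.sqrt_le_sqrt hsum
    _ = K * √(∑' j, x j ^ 2) := by rw [Real.sqrt_mul (sq_nonneg K), Real.sqrt_sq hK]

lemma summable_sub_sq {x y : ι → ℝ} (hx : Summable fun j ↦ x j ^ 2)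
    (hy : Summable fun j ↦ y j ^ 2) : Summable fun j ↦ (x j - y j) ^ 2 :=
  ((hx.add hy).mul_left 2).of_nonneg_of_le (fun _ ↦ sq_nonneg _) fun j ↦ by
    simpa [sub_eq_add_neg] using add_sq_le (a := x j) (b := -y j)

theorem noisy_data_propagation_general (hα : α ∈ Ioo 0 1) (hγ : 0 < γ) {lam : ι → ℝ}
    (hlam : ∀ j, 0 ≤ lam j) {g gδ : ι → ℝ} (hd : Summable fun j ↦ (g j - gδ j) ^ 2)
    (hδ : √(∑' j, (g j - gδ j) ^ 2) ≤ δ) (ht : t ∈ Ioc 0 T) :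
    √(∑' j, (mittagLeffler α (-(lam j * t ^ α)) /
        (γ + mittagLeffler α (-(lam j * T ^ α))) * (g j - gδ j)) ^ 2) ≤
      max 1 (Real.Gamma (1 + α) * Real.Gamma (1 - α) * T ^ α) * δ * min γ⁻¹ (t ^ (-α)) := by
  have hT : 0 < T := ht.1.trans_le ht.2
  have hfilter_nonneg (j : ι) : 0 ≤ mittagLeffler α (-(lam j * t ^ α)) /
      (γ + mittagLeffler α (-(lam j * T ^ α))) :=
    div_nonneg (mittagLeffler_neg_pos hα (mul_nonneg (hlam j) (Real.rpow_nonneg ht.1.le _))).le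
      (add_pos hγ (mittagLeffler_neg_pos hα (mul_nonneg (hlam j) (Real.rpow_nonneg hT.le _)))).le
  have hbound : 0 ≤ max 1 (Real.Gamma (1 + α) * Real.Gamma (1 - α) * T ^ α) *
      min γ⁻¹ (t ^ (-α)) :=
    mul_nonneg (zero_le_one.trans (le_max_left _ _))
      (le_min (inv_pos.2 hγ).le (Real.rpow_nonneg ht.1.le _))
  refine (sqrt_tsum_sq_mul_le hbound (fun j ↦ ?_) hd).trans ?_
  · rw [abs_of_nonneg (hfilter_nonneg j)]
    exact mittagLeffler_div_add_mittagLeffler_le hα hγ (hlam j) ht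
  · rw [mul_right_comm _ δ]
    exact mul_le_mul_of_nonneg_left hδ hbound

end FilterFactor

/-- Data-propagation estimate: the difference of the regularized solutions computed with
exact data `g` and noisy data `gδ` (given via their `ℓ²` coefficient sequences against the
eigenbasis) is controlled by `δ · min(γ⁻¹, t^{-α})`. -/
theorem noisy_data_propagation (α T : ℝ) (hα : α ∈ Set.Ioo (0 : ℝ) 1) (hT : 0 < T) :
    ∃ c : ℝ, 0 < c ∧
      ∀ γ δ : ℝ, 0 < γ → 0 < δ →
      ∀ lam : ℕ → ℝ, (∀ j, 0 < lam j) →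
      ∀ g gδ : ℕ → ℝ, Summable (fun j => g j ^ 2) → Summable (fun j => gδ j ^ 2) →
        Real.sqrt (∑' j : ℕ, (g j - gδ j) ^ 2) ≤ δ →
        ∀ t : ℝ, t ∈ Set.Ioc (0 : ℝ) T →
          Real.sqrt (∑' j : ℕ,
              (mittagLeffler α (-(lam j * t ^ α)) /
                (γ + mittagLeffler α (-(lam j * T ^ α))) * (g j - gδ j)) ^ 2)
            ≤ c * δ * min γ⁻¹ (t ^ (-α)) :=
  ⟨_, lt_max_of_lt_left one_pos, fun _ _ hγ _ _ hlam _ _ hg hgδ hδ _ ht ↦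
    noisy_data_propagation_general hα hγ (fun j ↦ (hlam j).le) (summable_sub_sq hg hgδ) hδ ht⟩
end
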